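/- Let p be a prime and let G be a finite p-group with |G| = p^n. If cod(G) = {p^i | 0 ≤ i ≤ n-1}, then G has nilpotence class at most 2 or G has maximal class (nilpotence class n-1). -/

import Mathlib

open CategoryTheory

/-- The degree of a complex representation: the dimension of the underlying vector space. -/
noncomputable def repDegree {G : Type} [Group G] (V : FDRep ℂ G) : ℕ :=
  Module.finrank ℂ V

/-- The kernel of a representation of `G`, as a subgroup of `G`. -/
noncomputable def repKer {G : Type} [Group G] (V : FDRep ℂ G) : Subgroup G :=
  MonoidHom.ker (Representation.asGroupHom V.ρ)

/-- The codegree of a character: `|G : ker χ| / χ(1)`. -/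
noncomputable def codegree {G : Type} [Group G] (V : FDRep ℂ G) : ℕ :=
  (repKer V).index / repDegree V

/-- `cod(G)`: the set of codegrees of the irreducible complex characters of `G`. -/
def codSet (G : Type) [Group G] : Set ℕ :=
  {m | ∃ V : FDRep ℂ G, Simple V ∧ codegree V = m}

/-- `cd(G)`: the set of degrees of the irreducible complex characters of `G`. -/
def cdSet (G : Type) [Group G] : Set ℕ :=
  {m | ∃ V : FDRep ℂ G, Simple V ∧ repDegree V = m}

/-- The nilpotency class of `G`: the least `n` with `upperCentralSeries G n = ⊤`. -/
noncomputable def nilClass (G : Type) [Group G] : ℕ :=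
  sInf {n | upperCentralSeries G n = ⊤}

open scoped Classical in
/-- The character of `G` induced from the linear character `lam` of the subgroup `H`. -/
noncomputable def indLinearChar {G : Type} [Group G] [Fintype G] (H : Subgroup G)
    (lam : H →* ℂˣ) : G → ℂ :=
  fun g => (∑ x : G, if h : x * g * x⁻¹ ∈ H then ((lam ⟨x * g * x⁻¹, h⟩ : ℂˣ) : ℂ) else 0) /
    (Nat.card H : ℂ)

/-- A finite group is normally monomial if every irreducible complex character is induced
from a linear character of a normal subgroup. -/
def NormallyMonomial (G : Type) [Group G] [Fintype G] : Prop :=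
  ∀ V : FDRep ℂ G, Simple V → ∃ (H : Subgroup G) (lam : H →* ℂˣ),
    H.Normal ∧ FDRep.character V = indLinearChar H lam


/-- Invariant-subspace irreducibility. -/
def IrrRep {G : Type} [Group G] {W : Type} [AddCommGroup W] [Module ℂ W]
    (r : G →* (W →ₗ[ℂ] W)) : Prop :=
  ∀ U : Submodule ℂ W, (∀ g, ∀ v ∈ U, r g v ∈ U) → U = ⊥ ∨ U = ⊤

theorem nontrivial_of_simple {G : Type} [Group G] (V : FDRep ℂ G) (hV : Simple V) :
    Nontrivial V := by
  by_contra h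
  rw [not_nontrivial_iff_subsingleton] at h
  apply id_nonzero V
  ext v
  exact Subsingleton.elim (α := V) _ _

theorem irr_of_simple {G : Type} [Group G] (V : FDRep ℂ G) (hV : Simple V) :
    IrrRep V.ρ := by
  intro U hU
  let r : Representation ℂ G U :=
    { toFun := fun g => (V.ρ g).restrict (hU g)
      map_one' := by ext v; simp
      map_mul' := by intro g h; ext v; simp }
  let f : FDRep.of r ⟶ V :=
    ⟨FGModuleCat.ofHom U.subtype, by intro g; ext v; rfl⟩
  have hm : Mono f := by
    have : Mono ((forget₂ (FDRep ℂ G) (FGModuleCat ℂ)).map f) := by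
      apply ConcreteCategory.mono_of_injective
      exact Subtype.val_injective
    exact (forget₂ (FDRep ℂ G) (FGModuleCat ℂ)).mono_of_mono_map this
  by_cases h0 : f = 0
  · left
    rw [Submodule.eq_bot_iff]
    intro x hx
    have : f.hom.hom.hom ⟨x, hx⟩ = 0 := by rw [h0]; rfl
    exact this
  · right
    have hi : IsIso f := (Simple.mono_isIso_iff_nonzero f).2 h0
    rw [eq_top_iff]
    intro x _
    have h1 := inv f ≫ f
    have h2 : ((inv f).hom ≫ f.hom).hom.hom x = x := by
      rw [← Action.comp_hom, IsIso.inv_hom_id]; rfl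
    have h3 : f.hom.hom.hom ((inv f).hom.hom.hom x) = x := h2
    rw [← h3]
    exact Subtype.property ((inv f).hom.hom.hom x)

theorem schur_scalar {G : Type} [Group G] {W : Type} [AddCommGroup W] [Module ℂ W]
    [FiniteDimensional ℂ W] [Nontrivial W]
    (r : G →* (W →ₗ[ℂ] W)) (hr : IrrRep r) (T : W →ₗ[ℂ] W) (hT : ∀ g v, T (r g v) = r g (T v)) :
    ∃ c : ℂ, ∀ v, T v = c • v := by
  obtain ⟨c, hc⟩ := Module.End.exists_eigenvalue T
  refine ⟨c, ?_⟩
  rcases hr (Module.End.eigenspace T c) (by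
    intro g v hv
    rw [Module.End.mem_eigenspace_iff] at hv ⊢
    rw [hT, hv, map_smul]) with h | h
  · exact absurd h hc
  · intro v
    have : v ∈ Module.End.eigenspace T c := by rw [h]; trivial
    exact Module.End.mem_eigenspace_iff.1 this

/-- Elements whose action commutes with everything act by scalars, giving a linear character. -/
theorem exists_char {G : Type} [Group G] {W : Type} [AddCommGroup W] [Module ℂ W]
    [FiniteDimensional ℂ W] [Nontrivial W]
    (r : G →* (W →ₗ[ℂ] W)) (hr : IrrRep r) :
    ∃ c : G → ℂ, ∀ g, (∀ h, r (g * h) = r (h * g)) → ∀ v, r g v = c g • v := by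
  have : ∀ g, ∃ c : ℂ, (∀ h, r (g * h) = r (h * g)) → ∀ v, r g v = c • v := by
    intro g
    by_cases hg : ∀ h, r (g * h) = r (h * g)
    · obtain ⟨c, hc⟩ := schur_scalar r hr (r g) (by
        intro h v
        have := congrArg (fun T => T v) (hg h)
        simpa using this)
      exact ⟨c, fun _ => hc⟩
    · exact ⟨0, fun h => absurd h hg⟩
  choose c hc using this
  exact ⟨c, hc⟩
open scoped commutatorElement

theorem small_gen {G : Type} [Group G] {H S : Subgroup G} {p : ℕ} (hp : p.Prime)
    (hH : H.index = p) (hHS : H ≤ S) {x : G} (hx : x ∉ H) (hxS : x ∈ S) : S = ⊤ := by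
  have h1 := Subgroup.relIndex_mul_index hHS
  rw [hH] at h1
  rcases (Nat.dvd_prime hp).1 (Dvd.intro_left _ h1) with h | h
  · exact Subgroup.index_eq_one.1 h
  · exfalso
    rw [h] at h1
    have : H.relIndex S = 1 := by
      have := hp.pos
      nlinarith
    exact hx (Subgroup.relIndex_eq_one.1 this hxS)

/-- The subgroup of all `h` with `[a,h] ∈ N`. -/
def commSub {G : Type} [Group G] (N : Subgroup G) [N.Normal] (a : G) : Subgroup G :=
  (Subgroup.centralizer {(QuotientGroup.mk' N a)}).comap (QuotientGroup.mk' N)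

theorem mem_commSub {G : Type} [Group G] (N : Subgroup G) [N.Normal] (a h : G) :
    h ∈ commSub N a ↔ ⁅a, h⁆ ∈ N := by
  rw [commSub, Subgroup.mem_comap, Subgroup.mem_centralizer_singleton_iff,
    ← (QuotientGroup.eq_one_iff (N := N) ⁅a, h⁆)]
  change _ ↔ QuotientGroup.mk' N ⁅a, h⁆ = 1
  rw [map_commutatorElement, commutatorElement_eq_one_iff_mul_comm]
  exact eq_comm

theorem mem_ucs_succ {G : Type} [Group G] (i : ℕ) (a : G) :
    a ∈ Subgroup.upperCentralSeries G (i+1) ↔ ∀ h, ⁅a, h⁆ ∈ Subgroup.upperCentralSeries G i :=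
  Subgroup.mem_upperCentralSeries_succ_iff

/-- `G/Z_{i+1}` is never a nontrivial cyclic group. -/
theorem ucs_cyclic {G : Type} [Group G] (i : ℕ) (g : G)
    (h : ∀ S : Subgroup G, Subgroup.upperCentralSeries G (i+1) ≤ S → g ∈ S → S = ⊤) :
    Subgroup.upperCentralSeries G (i+1) = ⊤ := by
  have h1 : commSub (Subgroup.upperCentralSeries G i) g = ⊤ := by
    apply h
    · intro z hz
      rw [mem_commSub, ← inv_mem_iff, commutatorElement_inv]
      exact (mem_ucs_succ i z).1 hz g
    · rw [mem_commSub, commutatorElement_self]; exact one_mem _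
  apply h _ le_rfl
  rw [mem_ucs_succ]
  intro k
  rw [← mem_commSub, h1]; trivial

theorem inter_ucs_stable {G : Type} [Group G] (hG : Group.IsNilpotent G) (N : Subgroup G)
    [N.Normal] (j : ℕ)
    (h : N ⊓ Subgroup.upperCentralSeries G (j+1) ≤ Subgroup.upperCentralSeries G j) :
    N ≤ Subgroup.upperCentralSeries G j := by
  have key : ∀ k, N ⊓ Subgroup.upperCentralSeries G (j+k) ≤ Subgroup.upperCentralSeries G j := by
    intro k
    induction k with
    | zero => exact inf_le_right
    | succ k ih =>
      intro a ha
      apply h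
      refine Subgroup.mem_inf.2 ⟨ha.1, ?_⟩
      rw [mem_ucs_succ]
      intro g
      apply ih
      refine Subgroup.mem_inf.2 ⟨?_, (mem_ucs_succ _ _).1 ha.2 g⟩
      have : ⁅a, g⁆ = a * (g * a⁻¹ * g⁻¹) := by rw [commutatorElement_def]; group
      rw [this]
      exact mul_mem ha.1 (Subgroup.Normal.conj_mem ‹_› _ (inv_mem ha.1) g)
  obtain ⟨c, hc⟩ := hG.nilpotent
  have h2 := key c
  have : Subgroup.upperCentralSeries G (j+c) = ⊤ := by
    rw [eq_top_iff, ← hc]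
    exact Subgroup.upperCentralSeries_mono G (by omega)
  rw [this, inf_top_eq] at h2
  exact h2

theorem normal_ucs {G : Type} [Group G] [Finite G] {p n : ℕ} (hp : p.Prime)
    (hc : Nat.card G = p ^ n) (hG : Group.IsNilpotent G) (N : Subgroup G)
    [N.Normal] (j : ℕ) : N ≤ Subgroup.upperCentralSeries G j ∨
      p ^ j ∣ Nat.card (N ⊓ Subgroup.upperCentralSeries G j : Subgroup G) := by
  induction j with
  | zero => right; simp
  | succ j ih =>
    rcases ih with h | h
    · left; exact h.trans (Subgroup.upperCentralSeries_mono G (by omega))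
    by_cases hN : N ≤ Subgroup.upperCentralSeries G j
    · left; exact hN.trans (Subgroup.upperCentralSeries_mono G (by omega))
    right
    have hle : N ⊓ Subgroup.upperCentralSeries G j ≤ N ⊓ Subgroup.upperCentralSeries G (j+1) :=
      inf_le_inf_left _ (Subgroup.upperCentralSeries_mono G (by omega))
    have hlt : N ⊓ Subgroup.upperCentralSeries G j < N ⊓ Subgroup.upperCentralSeries G (j+1) := by
      refine lt_of_le_of_ne hle ?_
      intro he
      apply hN
      apply inter_ucs_stable hG
      rw [← he]; exact inf_le_right
    obtain ⟨a, ha, ha'⟩ := (Nat.dvd_prime_pow hp).1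
      (hc ▸ Subgroup.card_subgroup_dvd_card (N ⊓ Subgroup.upperCentralSeries G j))
    obtain ⟨b, hb, hb'⟩ := (Nat.dvd_prime_pow hp).1
      (hc ▸ Subgroup.card_subgroup_dvd_card (N ⊓ Subgroup.upperCentralSeries G (j+1)))
    have hcl : Nat.card (N ⊓ Subgroup.upperCentralSeries G j : Subgroup G) <
        Nat.card (N ⊓ Subgroup.upperCentralSeries G (j+1) : Subgroup G) := by
      refine lt_of_le_of_ne (Subgroup.card_le_of_le hle) ?_
      intro he
      exact hlt.ne (Subgroup.eq_of_le_of_card_ge hle he.ge)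
    rw [ha'] at h hcl
    rw [hb'] at hcl ⊢
    have h1 := (Nat.pow_dvd_pow_iff_le_right hp.one_lt).1 h
    have h2 := (Nat.pow_lt_pow_iff_right hp.one_lt).1 hcl
    exact Nat.pow_dvd_pow p (by omega)

theorem normal_le_ucs {G : Type} [Group G] [Finite G] {p n : ℕ} (hp : p.Prime)
    (hc : Nat.card G = p ^ n) (hG : Group.IsNilpotent G) (N : Subgroup G)
    [N.Normal] (j : ℕ) (hN : Nat.card N = p ^ j) : N ≤ Subgroup.upperCentralSeries G j := by
  rcases normal_ucs hp hc hG N j with h | h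
  · exact h
  · have := Subgroup.eq_of_le_of_card_ge (inf_le_left : N ⊓ Subgroup.upperCentralSeries G j ≤ N)
      (by rw [hN]; exact Nat.le_of_dvd Nat.card_pos h)
    rw [← this]; exact inf_le_right

/-- The class of a group of order `p^n`, `n ≥ 2`, is at most `n-1`. -/
theorem ucs_pred {G : Type} [Group G] [Finite G] {p n : ℕ} (hp : p.Prime)
    (hc : Nat.card G = p ^ n) (hG : Group.IsNilpotent G) (hn : 2 ≤ n) :
    Subgroup.upperCentralSeries G (n-1) = ⊤ := by
  rcases normal_ucs hp hc hG ⊤ (n-1) with h | h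
  · exact eq_top_iff.2 h
  · rw [top_inf_eq] at h
    by_contra hne
    have h1 := Subgroup.card_mul_index (Subgroup.upperCentralSeries G (n-1))
    obtain ⟨q, hq⟩ := h
    rw [hq, hc, mul_assoc] at h1
    have h2 : p ^ n = p ^ (n-1) * p := by rw [← pow_succ]; congr 1; omega
    rw [h2] at h1
    have h3 := Nat.eq_of_mul_eq_mul_left (pow_pos hp.pos _) h1
    have h4 : (Subgroup.upperCentralSeries G (n-1)).index = p := by
      rcases (Nat.dvd_prime hp).1 (Dvd.intro_left _ h3) with h | h
      · exact absurd (Subgroup.index_eq_one.1 h) hne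
      · exact h
    obtain ⟨x, -, hx⟩ := SetLike.exists_of_lt (lt_top_iff_ne_top.2 hne)
    apply hne
    obtain ⟨i, hi⟩ : ∃ i, n - 1 = i + 1 := ⟨n-2, by omega⟩
    rw [hi] at h4 hx ⊢
    exact ucs_cyclic i x (fun S hS hxS => small_gen hp h4 hS hx hxS)

theorem exists_abelian {G : Type} [Group G] {W : Type} [AddCommGroup W] [Module ℂ W]
    [FiniteDimensional ℂ W] [Nontrivial W]
    (r : G →* (W →ₗ[ℂ] W)) (hr : IrrRep r) (hinj : Function.Injective r) {p : ℕ} (hp : p.Prime)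
    (hd : Module.finrank ℂ W = p) (a : G) (ha : a ∉ Subgroup.center G)
    (ha2 : ∀ g : G, ⁅g, a⁆ ∈ Subgroup.center G) :
    ∃ A : Subgroup G, A.index = p ∧ A.Normal ∧ ∀ x ∈ A, ∀ y ∈ A, x * y = y * x := by
  obtain ⟨c, hc⟩ := exists_char r hr
  obtain ⟨v₀, hv₀⟩ := exists_ne (0 : W)
  have hcz : ∀ z ∈ Subgroup.center G, ∀ v, r z v = c z • v := by
    intro z hz
    apply hc
    intro h
    rw [Subgroup.mem_center_iff.1 hz h]
  have hcmul : ∀ z ∈ Subgroup.center G, ∀ w ∈ Subgroup.center G, c (z * w) = c z * c w := by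
    intro z hz w hw
    have h1 := hcz _ (mul_mem hz hw) v₀
    rw [map_mul, Module.End.mul_apply, hcz w hw, map_smul, hcz z hz, smul_smul] at h1
    rw [mul_comm (c z)]
    exact (smul_left_injective ℂ hv₀ h1).symm
  have hc1 : ∀ z ∈ Subgroup.center G, c z = 1 → z = 1 := by
    intro z hz h
    apply hinj
    ext v
    rw [hcz z hz, h, map_one]; simp
  have hc1' : c 1 = 1 := by
    have h1 := hcz 1 (one_mem _) v₀
    rw [map_one, Module.End.one_apply] at h1
    apply smul_left_injective ℂ hv₀
    simpa using h1.symm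
  let ζ : G →* ℂ :=
    { toFun := fun g => c ⁅g, a⁆
      map_one' := by simp [hc1']
      map_mul' := by
        intro g h
        rw [← hcmul _ (ha2 g) _ (ha2 h)]
        congr 1
        have h1 := Subgroup.mem_center_iff.1 (ha2 h) g
        have h2 : ⁅g * h, a⁆ = g * ⁅h, a⁆ * (g⁻¹ * ⁅g, a⁆) := by
          simp only [commutatorElement_def]; group
        rw [h2, h1]
        have h3 := Subgroup.mem_center_iff.1 (ha2 g) ⁅h, a⁆
        rw [← h3]; group }
  have hζ : ∀ g v, r g (r a v) = ζ g • r a (r g v) := by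
    intro g v
    have h1 : g * a = ⁅g, a⁆ * (a * g) := by simp only [commutatorElement_def]; group
    have h2 := congrArg (fun T => r T v) h1
    simp only [map_mul, Module.End.mul_apply] at h2
    rw [h2, hcz _ (ha2 g)]
    rfl
  have hζp : ∀ g, ζ g ^ p = 1 := by
    intro g
    have h1 : r g * r a = ζ g • (r a * r g) := by
      ext v; exact hζ g v
    have h2 := congrArg LinearMap.det h1
    rw [LinearMap.det_smul, map_mul, map_mul, hd, mul_comm (LinearMap.det (r a))] at h2
    have hu : ∀ g, LinearMap.det (r g) ≠ 0 := by
      intro g h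
      have h3 : LinearMap.det (r g * r g⁻¹) = 1 := by
        rw [← map_mul, mul_inv_cancel, map_one, map_one]
      rw [map_mul, h, zero_mul] at h3
      exact zero_ne_one h3
    have h4 := mul_ne_zero (hu g) (hu a)
    exact (mul_right_cancel₀ h4 (by rw [one_mul]; exact h2)).symm
  have hker : ∀ g, ζ g = 1 ↔ g * a = a * g := by
    intro g
    rw [← commutatorElement_eq_one_iff_mul_comm]
    constructor
    · exact hc1 _ (ha2 g)
    · intro h
      change c ⁅g, a⁆ = 1
      rw [h, hc1']
  obtain ⟨g₀, hg₀⟩ : ∃ g, ζ g ≠ 1 := by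
    by_contra hcon
    push Not at hcon
    apply ha
    rw [Subgroup.mem_center_iff]
    intro g
    exact (hker g).1 (hcon g)
  have hprim : IsPrimitiveRoot (ζ g₀) p := by
    have := orderOf_eq_prime (hp := ⟨hp⟩) (hζp g₀) hg₀
    rw [← this]; exact IsPrimitiveRoot.orderOf _
  refine ⟨ζ.toHomUnits.ker, ?_, inferInstance, ?_⟩
  · rw [Subgroup.index_ker]
    have hle : ζ.toHomUnits.range ≤ rootsOfUnity p ℂ := by
      rintro _ ⟨g, rfl⟩
      rw [mem_rootsOfUnity]
      ext
      simpa using hζp g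
    have : NeZero p := ⟨hp.ne_zero⟩
    have h1 := Subgroup.card_dvd_of_le hle
    rw [Complex.card_rootsOfUnity] at h1
    rcases (Nat.dvd_prime hp).1 h1 with h | h
    · exfalso
      apply hg₀
      rw [Subgroup.card_eq_one] at h
      have h2 : ζ.toHomUnits g₀ ∈ ζ.toHomUnits.range := ⟨g₀, rfl⟩
      rw [h, Subgroup.mem_bot] at h2
      simpa using congrArg Units.val h2
    · exact h
  · obtain ⟨μ, hμ⟩ := Module.End.exists_eigenvalue (r a)
    obtain ⟨v, hv⟩ := hμ.exists_hasEigenvector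
    have hv1 : r a v = μ • v := hv.apply_eq_smul
    have hinv : ∀ g w, r g⁻¹ (r g w) = w := by
      intro g w
      rw [← Module.End.mul_apply, ← map_mul, inv_mul_cancel, map_one]; rfl
    have hr0 : ∀ g w, w ≠ 0 → r g w ≠ 0 := by
      intro g w hw h
      apply hw
      rw [← hinv g w, h, map_zero]
    have hμ0 : μ ≠ 0 := by
      rintro rfl
      rw [zero_smul] at hv1
      exact hr0 a v hv.2 hv1
    have hζ0 : ∀ g, ζ g ≠ 0 := by
      intro g h
      have := hζp g
      rw [h, zero_pow hp.ne_zero] at this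
      exact zero_ne_one this
    let m : Fin p → ℂ := fun i => μ * (ζ g₀ ^ (i:ℕ))⁻¹
    let w : Fin p → W := fun i => r (g₀ ^ (i:ℕ)) v
    have hw : ∀ i, r a (w i) = m i • w i := by
      intro i
      have h1 := hζ (g₀ ^ (i:ℕ)) v
      rw [hv1, map_smul, map_pow ζ] at h1
      have h2 : ζ g₀ ^ (i:ℕ) ≠ 0 := pow_ne_zero _ (hζ0 _)
      change r a (r (g₀ ^ (i:ℕ)) v) = (μ * (ζ g₀ ^ (i:ℕ))⁻¹) • r (g₀ ^ (i:ℕ)) v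
      rw [mul_comm, mul_smul, h1, smul_smul, inv_mul_cancel₀ h2, one_smul]
    have hminj : Function.Injective m := by
      intro i j hij
      have h1 : ζ g₀ ^ (i:ℕ) = ζ g₀ ^ (j:ℕ) := inv_injective (mul_left_cancel₀ hμ0 hij)
      exact Fin.ext (hprim.pow_inj i.2 j.2 h1)
    have hli : LinearIndependent ℂ w :=
      Module.End.eigenvectors_linearIndependent' (r a) m hminj w (fun i =>
        ⟨Module.End.mem_eigenspace_iff.2 (hw i), hr0 _ _ hv.2⟩)
    have : Nonempty (Fin p) := ⟨⟨0, hp.pos⟩⟩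
    let b := basisOfLinearIndependentOfCardEqFinrank hli (by rw [Fintype.card_fin, hd])
    have hb : ∀ i, b i = w i := fun i => by simp [b]
    have hcoord : ∀ u i, b.repr (r a u) i = m i * b.repr u i := by
      intro u i
      have : (b.coord i) ∘ₗ (r a) = m i • b.coord i := by
        apply b.ext
        intro j
        rw [LinearMap.comp_apply, hb, hw, map_smul, LinearMap.smul_apply, ← hb]
        simp only [Module.Basis.coord_apply, Module.Basis.repr_self, smul_eq_mul]
        by_cases hij : j = i
        · rw [hij]
        · rw [Finsupp.single_eq_of_ne (Ne.symm hij)]; simp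
      exact congrArg (fun T => T u) this
    have hdiag : ∀ i u, r a u = m i • u → u = b.repr u i • w i := by
      intro i u hu
      apply b.repr.injective
      ext j
      rw [← hb, map_smul, Module.Basis.repr_self]
      by_cases hij : i = j
      · subst hij; simp
      · have h1 := hcoord u j
        rw [hu, map_smul, Finsupp.smul_apply, smul_eq_mul] at h1
        have h2 : m i ≠ m j := fun h => hij (hminj h)
        have h3 : b.repr u j = 0 := by
          by_contra h0
          exact h2 (mul_right_cancel₀ h0 h1)
        simp [h3, Finsupp.single_eq_of_ne (Ne.symm hij)]
    have hstab : ∀ x ∈ ζ.toHomUnits.ker, ∀ i, ∃ k : ℂ, r x (w i) = k • w i := by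
      intro x hx i
      have hx1 : ζ x = 1 := by
        rw [MonoidHom.mem_ker] at hx
        simpa using congrArg Units.val hx
      refine ⟨_, hdiag i _ ?_⟩
      have := hζ x (w i)
      rw [hx1, one_smul, hw, map_smul] at this
      exact this.symm
    intro x hx y hy
    apply hinj
    apply b.ext
    intro i
    obtain ⟨k, hk⟩ := hstab x hx i
    obtain ⟨l, hl⟩ := hstab y hy i
    rw [hb, map_mul, map_mul, Module.End.mul_apply, Module.End.mul_apply, hk, hl, map_smul,
      map_smul, hk, hl, smul_comm]

theorem degree_le {G : Type} [Group G] [Finite G] {W : Type} [AddCommGroup W] [Module ℂ W]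
    [FiniteDimensional ℂ W] [Nontrivial W]
    (r : G →* (W →ₗ[ℂ] W)) (hr : IrrRep r) (A : Subgroup G)
    (hA : ∀ x ∈ A, ∀ y ∈ A, x * y = y * x) : Module.finrank ℂ W ≤ A.index := by
  obtain ⟨U, ⟨hU0, hUi⟩, hUm⟩ := (wellFounded_lt (α := Submodule ℂ W)).has_min
    {U | U ≠ ⊥ ∧ ∀ a ∈ A, ∀ v ∈ U, r a v ∈ U} ⟨⊤, top_ne_bot, fun _ _ _ _ => trivial⟩
  obtain ⟨v, hvU, hv0⟩ := Submodule.exists_mem_ne_zero_of_ne_bot hU0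
  have hsc : ∀ a ∈ A, ∃ c : ℂ, r a v = c • v := by
    intro a ha
    have : Nontrivial U := Submodule.nontrivial_iff_ne_bot.2 hU0
    obtain ⟨c, hc⟩ := Module.End.exists_eigenvalue ((r a).restrict (hUi a ha))
    obtain ⟨u, hu⟩ := hc.exists_hasEigenvector
    have hu1 : r a u = c • (u : W) := congrArg Subtype.val hu.apply_eq_smul
    refine ⟨c, ?_⟩
    by_contra hcon
    apply hUm (U ⊓ Module.End.eigenspace (r a) c)
    · refine ⟨?_, ?_⟩
      · intro hb
        have : (u : W) ∈ U ⊓ Module.End.eigenspace (r a) c :=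
          ⟨u.2, Module.End.mem_eigenspace_iff.2 hu1⟩
        rw [hb, Submodule.mem_bot] at this
        exact hu.2 (Subtype.ext this)
      · intro x hx t ht
        refine ⟨hUi x hx t ht.1, ?_⟩
        have h1 := Module.End.mem_eigenspace_iff.1 ht.2
        refine Module.End.mem_eigenspace_iff.2 ?_
        rw [← Module.End.mul_apply, ← map_mul, hA a ha x hx, map_mul, Module.End.mul_apply, h1,
          map_smul]
    · refine lt_of_le_of_ne inf_le_left ?_
      intro he
      rw [← he] at hvU
      exact hcon (Module.End.mem_eigenspace_iff.1 hvU.2)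
  have : Fintype (G ⧸ A) := Fintype.ofFinite _
  let f : G ⧸ A → W := fun q => r q.out v
  have hspan : Submodule.span ℂ (Set.range f) = ⊤ := by
    rcases hr (Submodule.span ℂ (Set.range f)) (by
      intro g t ht
      induction ht using Submodule.span_induction with
      | mem t ht =>
        obtain ⟨q, rfl⟩ := ht
        let q' : G ⧸ A := ((g * q.out : G) : G ⧸ A)
        have hq : (q'.out)⁻¹ * (g * q.out) ∈ A := by
          rw [← QuotientGroup.eq, QuotientGroup.out_eq']
        obtain ⟨c, hc⟩ := hsc _ hq
        have : r g (f q) = c • f q' := by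
          change r g (r q.out v) = c • r q'.out v
          rw [← map_smul, ← hc, ← Module.End.mul_apply, ← Module.End.mul_apply, ← map_mul,
            ← map_mul]
          congr 2
          group
        rw [this]
        exact Submodule.smul_mem _ _ (Submodule.subset_span ⟨q', rfl⟩)
      | zero => simp
      | add x y _ _ hx hy => rw [map_add]; exact add_mem hx hy
      | smul c x _ hx => rw [map_smul]; exact Submodule.smul_mem _ _ hx) with h | h
    · exfalso
      have h1 : f ((1 : G) : G ⧸ A) ∈ Submodule.span ℂ (Set.range f) :=
        Submodule.subset_span ⟨_, rfl⟩
      rw [h, Submodule.mem_bot] at h1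
      apply hv0
      have h2 : r (((1 : G) : G ⧸ A).out)⁻¹ (f ((1 : G) : G ⧸ A)) = v := by
        change r (((1 : G) : G ⧸ A).out)⁻¹ (r (((1 : G) : G ⧸ A).out) v) = v
        rw [← Module.End.mul_apply, ← map_mul, inv_mul_cancel, map_one]; rfl
      rw [← h2, h1, map_zero]
    · exact h
  have h1 := finrank_range_le_card (R := ℂ) f
  rw [Set.finrank, hspan, finrank_top] at h1
  rw [Subgroup.index, Nat.card_eq_fintype_card]
  exact h1

theorem rep_cyclic_prop {G : Type} [Group G] {W : Type} [AddCommGroup W] [Module ℂ W]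
    [FiniteDimensional ℂ W] [Nontrivial W]
    (r : G →* (W →ₗ[ℂ] W)) (hr : IrrRep r) {p : ℕ} (hp : p.Prime)
    (K : Subgroup G) (hK : ∀ g, g ∈ K ↔ r g = 1) (y z : G) (hy : ∀ h, ⁅y, h⁆ ∈ K)
    (hz : ∀ h, ⁅z, h⁆ ∈ K) (hyp : y ^ p ∈ K) (hzp : z ^ p ∈ K) (hzK : z ∉ K) :
    ∃ i : ℕ, y * (z ^ i)⁻¹ ∈ K := by
  obtain ⟨c, hc⟩ := exists_char r hr
  obtain ⟨v₀, hv₀⟩ := exists_ne (0 : W)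
  have hcen : ∀ y, (∀ h, ⁅y, h⁆ ∈ K) → ∀ v, r y v = c y • v := by
    intro y hy
    apply hc
    intro h
    have h1 := (hK _).1 (hy h)
    have h2 : y * h = ⁅y, h⁆ * (h * y) := by simp only [commutatorElement_def]; group
    rw [h2, map_mul, h1, one_mul]
  have hpow : ∀ y, (∀ h, ⁅y, h⁆ ∈ K) → ∀ (n : ℕ) v, r (y ^ n) v = c y ^ n • v := by
    intro y hy n
    induction n with
    | zero => simp
    | succ n ih => 
      intro v
      rw [pow_succ, map_mul, Module.End.mul_apply, hcen y hy, map_smul, ih, smul_smul, pow_succ,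
        mul_comm]
  have hone : ∀ y, (∀ h, ⁅y, h⁆ ∈ K) → y ^ p ∈ K → c y ^ p = 1 := by
    intro y hy hyp
    have h1 := hpow y hy p v₀
    rw [(hK _).1 hyp, Module.End.one_apply] at h1
    apply smul_left_injective ℂ hv₀
    simpa using h1.symm
  have hzne : c z ≠ 1 := by
    intro h
    apply hzK
    rw [hK]
    ext v
    rw [hcen z hz, h]; simp
  have : NeZero p := ⟨hp.ne_zero⟩
  have hprim : IsPrimitiveRoot (c z) p := by
    have := orderOf_eq_prime (hp := ⟨hp⟩) (hone z hz hzp) hzne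
    rw [← this]; exact IsPrimitiveRoot.orderOf _
  obtain ⟨i, -, hi⟩ := hprim.eq_pow_of_pow_eq_one (hone y hy hyp)
  refine ⟨i, ?_⟩
  rw [hK]
  have h1 : r y = r (z ^ i) := by
    ext v
    rw [hcen y hy, hpow z hz, hi]
  rw [map_mul, h1, ← map_mul, mul_inv_cancel, map_one]

theorem linear_case {G : Type} [Group G] [Finite G] {W : Type} [AddCommGroup W] [Module ℂ W]
    (r : G →* (W →ₗ[ℂ] W)) (hd : Module.finrank ℂ W = 1) {p n j : ℕ} (hp : p.Prime)
    (hc : Nat.card G = p ^ n) (hG : Group.IsNilpotent G) (hj : j ≤ 2)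
    (K : Subgroup G) [K.Normal] (hK : ∀ g, g ∈ K ↔ r g = 1) (hKc : Nat.card K = p ^ j) :
    Subgroup.upperCentralSeries G 2 = ⊤ := by
  have hK2 : K ≤ Subgroup.upperCentralSeries G 2 :=
    (normal_le_ucs hp hc hG K j hKc).trans (Subgroup.upperCentralSeries_mono G hj)
  let f : G →* ℂˣ := ((LinearMap.det : (W →ₗ[ℂ] W) →* ℂ).comp r).toHomUnits
  have hf : ∀ g, f g = 1 → g ∈ K := by
    intro g hg
    rw [hK]
    have h1 : LinearMap.det (r g) = 1 := by
      simpa [f] using congrArg Units.val hg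
    obtain ⟨v, hv0, hv⟩ := finrank_eq_one_iff'.1 hd
    have hsc : ∃ c : ℂ, r g = c • 1 := by
      obtain ⟨c, hc⟩ := hv (r g v)
      refine ⟨c, ?_⟩
      ext w
      obtain ⟨k, rfl⟩ := hv w
      rw [map_smul, ← hc]
      rw [LinearMap.smul_apply, Module.End.one_apply, smul_comm]
    obtain ⟨c, hc⟩ := hsc
    rw [hc, LinearMap.det_smul, hd, map_one] at h1
    rw [hc]
    simp at h1
    rw [h1, one_smul]
  have hfin : Finite f.range := Set.finite_range f
  have hcyc : IsCyclic f.range := inferInstance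
  obtain ⟨⟨_, g, rfl⟩, hg⟩ := hcyc.exists_generator
  refine ucs_cyclic 1 g ?_
  intro S hS hgS
  rw [eq_top_iff]
  intro h _
  obtain ⟨k, hk⟩ := Subgroup.mem_zpowers_iff.1 (hg ⟨f h, h, rfl⟩)
  have hk' : f g ^ k = f h := congrArg Subtype.val hk
  have h1 : h * (g ^ k)⁻¹ ∈ K := by
    apply hf
    rw [map_mul, map_inv, map_zpow, hk', mul_inv_cancel]
  have h2 := mul_mem (hS (hK2 h1)) (zpow_mem hgS k)
  simpa using h2

theorem comm_mem_of_gen {G : Type} [Group G] {A : Subgroup G} {p : ℕ} (hp : p.Prime)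
    (hA : A.index = p) {x : G} (hx : x ∉ A) (hAc : ∀ x ∈ A, ∀ y ∈ A, x * y = y * x)
    (N : Subgroup G) [N.Normal] (a : G) (ha : a ∈ A) (h : ⁅a, x⁆ ∈ N) (k : G) : ⁅a, k⁆ ∈ N := by
  have : commSub N a = ⊤ := by
    refine small_gen hp hA ?_ hx ((mem_commSub N a x).2 h)
    intro b hb
    rw [mem_commSub, commutatorElement_eq_one_iff_mul_comm.2 (hAc a ha b hb)]
    exact one_mem _
  rw [← mem_commSub, this]; trivial

theorem class_main {G : Type} [Group G] [Finite G] {p n : ℕ} (hp : p.Prime)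
    (hc : Nat.card G = p ^ n) (hG : Group.IsNilpotent G)
    (h2 : Subgroup.upperCentralSeries G 2 ≠ ⊤)
    (A : Subgroup G) [A.Normal] (hA : A.index = p) (hAc : ∀ x ∈ A, ∀ y ∈ A, x * y = y * x)
    (K : Subgroup G) [K.Normal] (hK : Nat.card K = p)
    (hP0 : ∀ y z : G, (∀ h : G, ⁅y, h⁆ = 1) → (∀ h : G, ⁅z, h⁆ = 1) → y ^ p = 1 → z ^ p = 1 →
      z ≠ 1 → ∃ i : ℕ, y * (z ^ i)⁻¹ = 1)
    (hPK : ∀ y z : G, (∀ h : G, ⁅y, h⁆ ∈ K) → (∀ h : G, ⁅z, h⁆ ∈ K) → y ^ p ∈ K → z ^ p ∈ K →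
      z ∉ K → ∃ i : ℕ, y * (z ^ i)⁻¹ ∈ K) (c : ℕ)
    (hcl : Subgroup.upperCentralSeries G c = ⊤) : n - 1 ≤ c := by
  have hKZ : K ≤ Subgroup.center G := by
    rw [← Subgroup.upperCentralSeries_one]
    exact normal_le_ucs hp hc hG K 1 (by rw [hK, pow_one])
  have hcen : ∀ z : G, z ∈ Subgroup.center G ↔ ∀ h : G, ⁅z, h⁆ = 1 := by
    intro z
    rw [Subgroup.mem_center_iff]
    refine forall_congr' fun h => ?_
    rw [commutatorElement_eq_one_iff_mul_comm, eq_comm]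
  have hAne : A ≠ ⊤ := by
    rintro rfl
    rw [Subgroup.index_top] at hA
    exact hp.one_lt.ne hA
  obtain ⟨x, -, hx⟩ := SetLike.exists_of_lt (lt_top_iff_ne_top.2 hAne)
  have hgen := fun (N : Subgroup G) [N.Normal] (a : G) => comm_mem_of_gen hp hA hx hAc N a
  have hcenA : ∀ a ∈ A, ⁅a, x⁆ = 1 → a ∈ Subgroup.center G := by
    intro a ha h
    rw [hcen]
    intro k
    exact Subgroup.mem_bot.1 (hgen ⊥ a ha (Subgroup.mem_bot.2 h) k)
  have hDA : ∀ a ∈ A, ⁅a, x⁆ ∈ A := by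
    intro a ha
    have : ⁅a, x⁆ = a * (x * a⁻¹ * x⁻¹) := by rw [commutatorElement_def]; group
    rw [this]
    exact mul_mem ha (Subgroup.Normal.conj_mem ‹_› _ (inv_mem ha) x)
  have hDmul : ∀ a ∈ A, ∀ b ∈ A, ⁅a * b, x⁆ = ⁅a, x⁆ * ⁅b, x⁆ := by
    intro a ha b hb
    have h1 := hAc a ha _ (hDA b hb)
    have h3 : ⁅a * b, x⁆ = (a * ⁅b, x⁆) * (a⁻¹ * ⁅a, x⁆) := by
      simp only [commutatorElement_def]; group
    rw [h3, h1, hAc _ (hDA a ha) _ (hDA b hb)]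
    group
  have hDpow : ∀ a ∈ A, ∀ m : ℕ, ⁅a ^ m, x⁆ = ⁅a, x⁆ ^ m := by
    intro a ha m
    induction m with
    | zero => simp
    | succ m ih => rw [pow_succ, hDmul _ (pow_mem ha m) _ ha, ih, pow_succ]
  have hxp : x ^ p ∈ A := by
    rw [← hA]; exact Subgroup.pow_index_mem A x
  -- central elements of the form `[a,x]` have `p`-th power one
  have hexp : ∀ a ∈ A, ⁅a, x⁆ ∈ Subgroup.center G → ⁅a, x⁆ ^ p = 1 := by
    intro a ha hz
    have hcm : Commute ⁅a, x⁆ x := (Subgroup.mem_center_iff.1 hz x).symm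
    have h1 : a * x * a⁻¹ = ⁅a, x⁆ * x := by rw [commutatorElement_def]; group
    have h3 : (a * x * a⁻¹) ^ p = ⁅a, x⁆ ^ p * x ^ p := by
      rw [h1, hcm.mul_pow]
    rw [conj_pow, hAc a ha _ hxp, mul_inv_cancel_right] at h3
    exact (mul_eq_right.1 h3.symm)
  have hKp : ∀ k ∈ K, k ^ p = 1 := by
    intro k hk
    rw [← hK]
    have := pow_card_eq_one' (x := (⟨k, hk⟩ : K))
    exact congrArg Subtype.val this
  obtain ⟨k₀, hk₀, hk₀1⟩ : ∃ k ∈ K, k ≠ 1 := by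
    have : K ≠ ⊥ := by
      rintro rfl
      rw [Subgroup.card_bot] at hK
      exact hp.one_lt.ne hK
    exact K.bot_or_exists_ne_one.resolve_left this
  have hOm : ∀ z ∈ Subgroup.center G, z ^ p = 1 → z ∈ K := by
    intro z hz hzp
    obtain ⟨i, hi⟩ := hP0 z k₀ ((hcen z).1 hz) ((hcen k₀).1 (hKZ hk₀)) hzp (hKp k₀ hk₀) hk₀1
    rw [mul_inv_eq_one] at hi
    rw [hi]
    exact pow_mem hk₀ i
  have hDK : ∀ a ∈ A, ⁅a, x⁆ ∈ Subgroup.center G → ⁅a, x⁆ ∈ K :=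
    fun a ha hz => hOm _ hz (hexp a ha hz)
  -- the element y
  have hA2 : ¬ A ≤ Subgroup.upperCentralSeries G 2 := by
    intro hle
    apply h2
    apply ucs_cyclic 1 x
    intro S hS hxS
    exact small_gen hp hA (hle.trans hS) hx hxS
  obtain ⟨a, ha3, ha2⟩ : ∃ a ∈ A ⊓ Subgroup.upperCentralSeries G 3,
      a ∉ Subgroup.upperCentralSeries G 2 := by
    by_contra hcon
    push Not at hcon
    exact hA2 (inter_ucs_stable hG A 2 hcon)
  have haA : a ∈ A := ha3.1
  have hyA := hDA a haA
  have hyZ : ⁅a, x⁆ ∉ Subgroup.center G := by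
    intro h
    apply ha2
    rw [mem_ucs_succ, Subgroup.upperCentralSeries_one]
    exact hgen (Subgroup.center G) a haA h
  have hy2 : ⁅a, x⁆ ∈ Subgroup.upperCentralSeries G 2 := (mem_ucs_succ 2 a).1 ha3.2 x
  have hDyZ : ⁅⁅a, x⁆, x⁆ ∈ Subgroup.center G := by
    rw [← Subgroup.upperCentralSeries_one]
    exact (mem_ucs_succ 1 _).1 hy2 x
  have hDyK := hDK _ hyA hDyZ
  have hyK : ∀ h, ⁅⁅a, x⁆, h⁆ ∈ K := hgen K _ hyA hDyK
  have hypZ : ⁅a, x⁆ ^ p ∈ Subgroup.center G := by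
    apply hcenA _ (pow_mem hyA p)
    rw [hDpow _ hyA]
    exact hexp _ hyA hDyZ
  have hypK : ⁅a, x⁆ ^ p ∈ K := by
    rw [← hDpow a haA] at hypZ ⊢
    exact hDK _ (pow_mem haA p) hypZ
  have hnoz : ∀ z ∈ Subgroup.center G, z ^ p ∈ K → z ∈ K := by
    intro z hz hzp
    by_contra hzK
    obtain ⟨i, hi⟩ := hPK _ z hyK (fun h => by rw [(hcen z).1 hz h]; exact one_mem _) hypK hzp hzK
    apply hyZ
    have := mul_mem (hKZ hi) (pow_mem hz i)
    rwa [inv_mul_cancel_right] at this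
  have hZK : Subgroup.center G ≤ K := by
    intro z hz
    have h3 : ∀ j, z ^ (p ^ j) ∈ K → z ∈ K := by
      intro j
      induction j with
      | zero => intro h; simpa using h
      | succ j ih =>
        intro h
        apply ih
        apply hnoz _ (pow_mem hz _)
        rwa [← pow_mul, ← pow_succ]
    apply h3 n
    rw [← hc, pow_card_eq_one']
    exact one_mem _
  -- counting
  have hcount : ∀ i, Nat.card (A ⊓ Subgroup.upperCentralSeries G i : Subgroup G) ≤ p ^ i := by
    intro i
    induction i with
    | zero => simp
    | succ i ih =>
      let f : (A ⊓ Subgroup.upperCentralSeries G (i+1) : Subgroup G) →* G :=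
        { toFun := fun a => ⁅(a : G), x⁆
          map_one' := by simp
          map_mul' := fun a b => hDmul _ a.2.1 _ b.2.1 }
      have h3 := Subgroup.card_mul_index f.ker
      rw [Subgroup.index_ker] at h3
      have h4 : Nat.card f.range ≤ p ^ i := by
        refine le_trans (Subgroup.card_le_of_le ?_) ih
        rintro _ ⟨b, rfl⟩
        exact Subgroup.mem_inf.2 ⟨hDA _ b.2.1, (mem_ucs_succ i _).1 b.2.2 x⟩
      have h5 : Nat.card f.ker ≤ p := by
        rw [← hK]
        refine Nat.card_le_card_of_injective
          (fun b : f.ker => (⟨b.1.1, hZK (hcenA _ b.1.2.1 b.2)⟩ : K)) ?_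
        intro b b' hb
        exact Subtype.ext (Subtype.ext (Subtype.mk.inj hb))
      rw [← h3, pow_succ, mul_comm]
      exact Nat.mul_le_mul h4 h5
  have h3 := hcount c
  rw [hcl, inf_top_eq] at h3
  have h4 := Subgroup.card_mul_index A
  rw [hA, hc] at h4
  have h5 : p ^ n ≤ p ^ (c + 1) := by
    rw [← h4, pow_succ]
    exact Nat.mul_le_mul_right p h3
  have := (Nat.pow_le_pow_iff_right hp.one_lt).1 h5
  omega

theorem nilClass_le {G : Type} [Group G] (m : ℕ) (h : Subgroup.upperCentralSeries G m = ⊤) :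
    nilClass G ≤ m := Nat.sInf_le h

theorem mem_repKer {G : Type} [Group G] (V : FDRep ℂ G) (g : G) :
    g ∈ repKer V ↔ V.ρ g = 1 := by
  rw [repKer, MonoidHom.mem_ker, Units.ext_iff, Representation.asGroupHom_apply]
  rfl

theorem main_aux (p n : ℕ) (hp : p.Prime) (G : Type) [Group G] [Finite G]
    (hcard : Nat.card G = p ^ n) (hG : Group.IsNilpotent G)
    (hcod : codSet G = {m | ∃ i ≤ n - 1, m = p ^ i}) (hn : 3 ≤ n)
    (h2 : Subgroup.upperCentralSeries G 2 ≠ ⊤) : nilClass G = n - 1 := by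
  have hpn : ∀ m, 0 < p ^ m := fun m => pow_pos hp.pos m
  have hidx : ∀ V : FDRep ℂ G, ∃ k ≤ n, (repKer V).index = p ^ k ∧
      Nat.card (repKer V) = p ^ (n - k) := by
    intro V
    have h1 := Subgroup.card_mul_index (repKer V)
    rw [hcard] at h1
    obtain ⟨k, hk, hk'⟩ := (Nat.dvd_prime_pow hp).1 (Dvd.intro_left _ h1)
    refine ⟨k, hk, hk', ?_⟩
    rw [hk'] at h1
    apply Nat.eq_of_mul_eq_mul_right (hpn k)
    rw [h1, ← pow_add]; congr 1; omega
  have hnorm : ∀ V : FDRep ℂ G, (repKer V).Normal := by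
    intro V; unfold repKer; infer_instance
  have hlin : ∀ V : FDRep ℂ G, repDegree V = 1 → ∀ j ≤ 2, Nat.card (repKer V) ≠ p ^ j := by
    intro V hd j hj hcj
    have := hnorm V
    exact h2 (linear_case V.ρ hd hp hcard hG hj (repKer V) (mem_repKer V) hcj)
  have hpos : ∀ V : FDRep ℂ G, Simple V → 0 < repDegree V := by
    intro V hV
    have := nontrivial_of_simple V hV
    exact Module.finrank_pos
  -- codegree `p^m` gives bounds
  have hbd : ∀ V : FDRep ℂ G, Simple V → ∀ k m, (repKer V).index = p ^ k → codegree V = p ^ m →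
      p ^ m * repDegree V ≤ p ^ k ∧ p ^ k < (p ^ m + 1) * repDegree V := by
    intro V hV k m hk hm
    rw [codegree, hk] at hm
    have hd := hpos V hV
    constructor
    · rw [← hm]; exact Nat.div_mul_le_self _ _
    · rw [← hm, mul_comm]; exact Nat.lt_mul_div_succ _ hd
  -- the first character
  obtain ⟨V, hV, hVc⟩ : p ^ (n-1) ∈ codSet G := by rw [hcod]; exact ⟨n-1, le_rfl, rfl⟩
  obtain ⟨k, hk, hki, hkc⟩ := hidx V
  obtain ⟨hb1, hb2⟩ := hbd V hV k (n-1) hki hVc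
  have hdV := hpos V hV
  have hkn : n - 1 ≤ k := by
    apply (Nat.pow_le_pow_iff_right hp.one_lt).1
    exact (Nat.le_mul_of_pos_right _ hdV).trans hb1
  have hkn' : k = n := by
    by_contra hne
    have hk1 : k = n - 1 := by omega
    have hd1 : repDegree V = 1 := by
      rw [hk1] at hb1
      have := hpn (n-1)
      by_contra h
      have h3 : 2 ≤ repDegree V := by omega
      nlinarith
    apply hlin V hd1 1 (by omega)
    rw [hkc]; congr 1; omega
  subst hkn'
  have hpow1 : p ^ k = p ^ (k-1) * p := by rw [← pow_succ]; congr 1; omega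
  have hpow2 : p ^ (k-1) = p ^ (k-2) * p := by rw [← pow_succ]; congr 1; omega
  have hdp : repDegree V = p := by
    apply le_antisymm
    · rw [hpow1] at hb1
      exact Nat.le_of_mul_le_mul_left hb1 (hpn _)
    · by_contra hlt
      push Not at hlt
      have h3 : p ≤ p ^ (k-1) := Nat.le_self_pow (by omega) p
      rw [hpow1] at hb2
      nlinarith
  have hVker : repKer V = ⊥ := by
    rw [← Subgroup.card_eq_one, hkc]; simp
  have hVirr := irr_of_simple V hV
  have hVnt := nontrivial_of_simple V hV
  have hVinj : Function.Injective V.ρ := by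
    intro g h hgh
    have : g * h⁻¹ ∈ repKer V := by
      rw [mem_repKer, map_mul, hgh, ← map_mul, mul_inv_cancel, map_one]
    rw [hVker, Subgroup.mem_bot, mul_inv_eq_one] at this
    exact this
  -- an element of `Z_2` outside the center
  obtain ⟨a, ha2, haZ⟩ : ∃ a ∈ Subgroup.upperCentralSeries G 2, a ∉ Subgroup.center G := by
    by_contra hcon
    push Not at hcon
    apply h2
    have h3 : (⊤ : Subgroup G) ≤ Subgroup.upperCentralSeries G 1 := by
      apply inter_ucs_stable hG ⊤ 1
      rw [top_inf_eq, Subgroup.upperCentralSeries_one]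
      exact hcon
    rw [eq_top_iff]
    exact h3.trans (Subgroup.upperCentralSeries_mono G (by omega))
  obtain ⟨A, hA, hAn, hAc⟩ := exists_abelian V.ρ hVirr hVinj hp hdp a haZ (by
    intro g
    rw [← inv_mem_iff, commutatorElement_inv, ← Subgroup.upperCentralSeries_one]
    exact (mem_ucs_succ 1 a).1 ha2 g)
  -- the second character
  obtain ⟨X, hX, hXc⟩ : p ^ (k-2) ∈ codSet G := by rw [hcod]; exact ⟨k-2, by omega, rfl⟩
  obtain ⟨l, hl, hli, hlc⟩ := hidx X
  obtain ⟨hx1, hx2⟩ := hbd X hX l (k-2) hli hXc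
  have hdX := hpos X hX
  have hXirr := irr_of_simple X hX
  have hXnt := nontrivial_of_simple X hX
  have hXle : repDegree X ≤ p := by
    rw [← hA]; exact degree_le X.ρ hXirr A hAc
  have hl2 : k - 2 ≤ l := by
    apply (Nat.pow_le_pow_iff_right hp.one_lt).1
    exact (Nat.le_mul_of_pos_right _ hdX).trans hx1
  have hl1 : l = k - 1 := by
    rcases (by omega : l = k - 2 ∨ l = k - 1 ∨ l = k) with h | h | h
    · exfalso
      have hd1 : repDegree X = 1 := by
        rw [h] at hx1
        have := hpn (k-2)
        by_contra h
        have h3 : 2 ≤ repDegree X := by omega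
        nlinarith
      apply hlin X hd1 2 le_rfl
      rw [hlc]; congr 1; omega
    · exact h
    · exfalso
      rw [h, hpow1, hpow2] at hx2
      have h3 : p ≤ p ^ (k-2) := Nat.le_self_pow (by omega) p
      have h4 := hp.two_le
      have h5 : (p ^ (k-2) + 1) * repDegree X ≤ (p ^ (k-2) + 1) * p :=
        Nat.mul_le_mul_left _ hXle
      have h6 : p ^ (k-2) * p * p < (p ^ (k-2) + 1) * p := lt_of_lt_of_le hx2 h5
      have h7 : p ^ (k-2) * p < p ^ (k-2) + 1 := Nat.lt_of_mul_lt_mul_right h6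
      nlinarith
  have hKc : Nat.card (repKer X) = p := by
    rw [hlc, hl1]
    have : k - (k - 1) = 1 := by omega
    rw [this, pow_one]
  have := hnorm X
  have hVbot : ∀ g, g ∈ (⊥ : Subgroup G) ↔ V.ρ g = 1 := by
    intro g; rw [← hVker]; exact mem_repKer V g
  apply le_antisymm
  · exact nilClass_le _ (ucs_pred hp hcard hG (by omega))
  · refine class_main hp hcard hG h2 A hA hAc (repKer X) hKc ?_ ?_ (nilClass G) ?_
    · intro y z hy hz hyp hzp hz1
      obtain ⟨i, hi⟩ := rep_cyclic_prop V.ρ hVirr hp ⊥ hVbot y z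
        (fun h => Subgroup.mem_bot.2 (hy h)) (fun h => Subgroup.mem_bot.2 (hz h))
        (Subgroup.mem_bot.2 hyp) (Subgroup.mem_bot.2 hzp) (fun h => hz1 (Subgroup.mem_bot.1 h))
      exact ⟨i, Subgroup.mem_bot.1 hi⟩
    · exact rep_cyclic_prop X.ρ hXirr hp (repKer X) (mem_repKer X)
    · exact Nat.sInf_mem (s := {n | Subgroup.upperCentralSeries G n = ⊤}) hG.nilpotent

/-- If a `p`-group of order `p^n` has `cod(G) = {p^i | 0 ≤ i ≤ n-1}`, then its nilpotence
class is at most 2 or it has maximal class. -/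
theorem full_codegrees_class_dichotomy (p n : ℕ) (hp : p.Prime) (G : Type) [Group G] [Fintype G]
    (hcard : Fintype.card G = p ^ n)
    (hcod : codSet G = {m | ∃ i ≤ n - 1, m = p ^ i}) :
    nilClass G ≤ 2 ∨ nilClass G = n - 1 := by
  have hc : Nat.card G = p ^ n := by rw [Nat.card_eq_fintype_card, hcard]
  have hG : Group.IsNilpotent G :=
    IsPGroup.isNilpotent (hp := ⟨hp⟩) (IsPGroup.of_card hc)
  by_cases h2 : Subgroup.upperCentralSeries G 2 = ⊤
  · exact Or.inl (nilClass_le 2 h2)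
  by_cases hn : 3 ≤ n
  · exact Or.inr (main_aux p n hp G hc hG hcod hn h2)
  · exfalso
    apply h2
    have h3 := normal_le_ucs hp hc hG ⊤ n (by rw [Subgroup.card_top, hc])
    exact eq_top_iff.2 (h3.trans (Subgroup.upperCentralSeries_mono G (by omega)))
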